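/- There is a decreasing chain of 12 word equations in 4 variables with solutions taken in the free monoid on two letters; explicitly, with variables x, y, z, t, the sequence xyz = zxy; xyt = txy; xyxzyz = zxzyxy; xyxtyt = txtyxy; xyxztyzt = ztxztyxy; xz = zx; xt = tx; xy = yx; x = 1; y = 1; z = 1; t = 1 is a decreasing chain. Hence dc(4) ≥ 12 for free monoids. -/

import Mathlib

/-- A monoid morphism `h` from the free monoid on the variables `Ξ` to a monoid `M`
is a solution of the equation `E = (U, V)` if `h U = h V`. -/
def IsSolution {Ξ M : Type*} [Monoid M] (h : FreeMonoid Ξ →* M)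
    (E : FreeMonoid Ξ × FreeMonoid Ξ) : Prop :=
  h E.1 = h E.2

/-- The variable `x`. -/
def x : FreeMonoid (Fin 4) := FreeMonoid.of 0
/-- The variable `y`. -/
def y : FreeMonoid (Fin 4) := FreeMonoid.of 1
/-- The variable `z`. -/
def z : FreeMonoid (Fin 4) := FreeMonoid.of 2
/-- The variable `t`. -/
def t : FreeMonoid (Fin 4) := FreeMonoid.of 3

/-- The sequence of equations `xyz = zxy; xyt = txy; xyxzyz = zxzyxy; xyxtyt = txtyxy;
xyxztyzt = ztxztyxy; xz = zx; xt = tx; xy = yx; x = 1; y = 1; z = 1; t = 1`. -/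
def chain4 : Fin 12 → FreeMonoid (Fin 4) × FreeMonoid (Fin 4) :=
  ![(x * y * z, z * x * y),
    (x * y * t, t * x * y),
    (x * y * x * z * y * z, z * x * z * y * x * y),
    (x * y * x * t * y * t, t * x * t * y * x * y),
    (x * y * x * z * t * y * z * t, z * t * x * z * t * y * x * y),
    (x * z, z * x),
    (x * t, t * x),
    (x * y, y * x),
    (x, 1),
    (y, 1),
    (z, 1),
    (t, 1)]

/-- The morphism sending the four variables to the given words. -/
def morph (p q r s : List (Fin 2)) : FreeMonoid (Fin 4) →* FreeMonoid (Fin 2) :=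
  FreeMonoid.lift ![FreeMonoid.ofList p, FreeMonoid.ofList q, FreeMonoid.ofList r,
    FreeMonoid.ofList s]

instance decEqFM : DecidableEq (FreeMonoid (Fin 2)) :=
  inferInstanceAs (DecidableEq (List (Fin 2)))

instance decSol (h : FreeMonoid (Fin 4) →* FreeMonoid (Fin 2))
    (E : FreeMonoid (Fin 4) × FreeMonoid (Fin 4)) : Decidable (IsSolution h E) :=
  decEqFM (h E.1) (h E.2)

/-- The above sequence of 12 word equations in 4 variables is a decreasing chain,
with solutions taken in the free monoid on two letters. Hence dc(4) ≥ 12. -/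
theorem chain4_is_decreasing_chain :
    ∀ i : Fin 12, ∃ h : FreeMonoid (Fin 4) →* FreeMonoid (Fin 2),
      (∀ j : Fin 12, j < i → IsSolution h (chain4 j)) ∧ ¬ IsSolution h (chain4 i) := by
  intro i
  fin_cases i
  · exact ⟨morph [0] [] [1] [], by decide⟩
  · exact ⟨morph [0] [] [] [1], by decide⟩
  · exact ⟨morph [0] [1] [0,1,0,1] [], by decide⟩
  · exact ⟨morph [0] [1] [] [0,1,0,1], by decide⟩
  · exact ⟨morph [0] [1] [0,1] [0,1], by decide⟩
  · exact ⟨morph [0] [1] [0,1] [], by decide⟩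
  · exact ⟨morph [0] [1] [] [0,1], by decide⟩
  · exact ⟨morph [0] [1] [] [], by decide⟩
  · exact ⟨morph [0] [] [] [], by decide⟩
  · exact ⟨morph [] [0] [] [], by decide⟩
  · exact ⟨morph [] [] [0] [], by decide⟩
  · exact ⟨morph [] [] [] [0], by decide⟩
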